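/- arXiv:1103.3195 — 4 statements merged into one kernel-verified Lean document; each statement's English description precedes it below -/
import Mathlib

section
/- (Generalized product rule.) Let m ≥ 1, let G ⊆ ℝ^{m+1} be open, let (f_A)_{A ⊆ {1,…,m}} be a family of continuously differentiable real-valued functions on G, set f = ∑_A f_A · e_A (a Clifford-algebra-valued C¹ function on G), and let g : G → Cl_{0,m} be continuously differentiable. Then on G: D(fg) = (Df)g + f̄(Dg) + 2(∑_{A : |A| ≡ 1,2 (mod 4)} f_A e_A)(∂₀ g) − 2 ∑_{i=1}^m ∑_{A : (i∉A ∧ |A|≡2,3 (mod 4)) ∨ (i∈A ∧ |A|≡0,1 (mod 4))} f_A · conj(e_A) e_i (∂_i g), and D̄(fg) = (D̄f)g + f̄(D̄g) + 2(∑_{A : |A| ≡ 1,2 (mod 4)} f_A e_A)(∂₀ g) + 2 ∑_{i=1}^m ∑_{A : (i∉A ∧ |A|≡2,3 (mod 4)) ∨ (i∈A ∧ |A|≡0,1 (mod 4))} f_A · conj(e_A) e_i (∂_i g), where f̄ = ∑_A f_A · conj(e_A). -/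
noncomputable section
open CliffordAlgebra

/-- The quadratic form `Q(v) = -∑ vᵢ²` on `ℝ^m`. -/
def Q (m : ℕ) : QuadraticForm ℝ (Fin m → ℝ) :=
  QuadraticMap.weightedSumSquares ℝ (fun _ : Fin m => (-1 : ℝ))

/-- The real Clifford algebra `Cl_{0,m}`. -/
abbrev Cl (m : ℕ) := CliffordAlgebra (Q m)

/-- The generators `eᵢ = ι(standard basis vector i)`. -/
def e (m : ℕ) (i : Fin m) : Cl m := ι (Q m) (Pi.single i 1)

/-- Given a linear identification `ψ` of `Cl_{0,m}` with a Euclidean space (which equips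
`Cl_{0,m}` with the structure of a finite-dimensional real normed algebra; the resulting
derivatives do not depend on this choice), `pd m ψ i h z` is the partial derivative of
`h : ℝ^{m+1} → Cl_{0,m}` at `z` in the `i`-th coordinate direction. -/
def pd (m : ℕ) (ψ : Cl m ≃ₗ[ℝ] EuclideanSpace ℝ (Fin (2 ^ m)))
    (i : Fin (m + 1)) (h : (Fin (m + 1) → ℝ) → Cl m) (z : Fin (m + 1) → ℝ) : Cl m :=
  ψ.symm (fderiv ℝ (fun w => ψ (h w)) z (Pi.single i 1))

/-- The generalized Cauchy-Riemann operator `D h = ∂₀ h + ∑ᵢ eᵢ (∂ᵢ h)`. -/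
def Dop (m : ℕ) (ψ : Cl m ≃ₗ[ℝ] EuclideanSpace ℝ (Fin (2 ^ m)))
    (h : (Fin (m + 1) → ℝ) → Cl m) (z : Fin (m + 1) → ℝ) : Cl m :=
  pd m ψ 0 h z + ∑ i : Fin m, e m i * pd m ψ i.succ h z

/-- The conjugate Cauchy-Riemann operator `D̄ h = ∂₀ h - ∑ᵢ eᵢ (∂ᵢ h)`. -/
def Dbar (m : ℕ) (ψ : Cl m ≃ₗ[ℝ] EuclideanSpace ℝ (Fin (2 ^ m)))
    (h : (Fin (m + 1) → ℝ) → Cl m) (z : Fin (m + 1) → ℝ) : Cl m :=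
  pd m ψ 0 h z - ∑ i : Fin m, e m i * pd m ψ i.succ h z

/-- `h` is continuously differentiable (of order `n`) on `G`, as a map into the
finite-dimensional space `Cl_{0,m}`. -/
def ClContDiffOn (m : ℕ) (ψ : Cl m ≃ₗ[ℝ] EuclideanSpace ℝ (Fin (2 ^ m))) (n : ℕ)
    (h : (Fin (m + 1) → ℝ) → Cl m) (G : Set (Fin (m + 1) → ℝ)) : Prop :=
  ContDiffOn ℝ n (fun w => ψ (h w)) G

/-- Clifford conjugation: `conj = reverse ∘ involute`. -/
def conjC {m : ℕ} (a : Cl m) : Cl m := reverse (involute a)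

/-- `e_A`: the product of the generators indexed by `A`, in increasing order of indices. -/
def eA (m : ℕ) (A : Finset (Fin m)) : Cl m := ((A.sort (· ≤ ·)).map (e m)).prod

/-!
Each partial derivative satisfies the Leibniz rule `∂ᵢ(f g) = (∂ᵢ f) g + f (∂ᵢ g)`, so the terms
in which `f` is differentiated make up `(D f) g`, and what is left is to move `f` past `1` and past
`eᵢ` while turning it into `f̄`. On basis elements this only costs a sign: `e_A` satisfies
`eᵢ e_A = involute(e_A) eᵢ` if `i ∉ A` and `eᵢ e_A = -involute(e_A) eᵢ` if `i ∈ A`, and reversing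
the order of its `k = |A|` factors multiplies it by `(-1)^(k(k-1)/2)`. The sums over `A` in the
correction terms collect the `A` for which the resulting sign is `-1`.
-/

section Sign

variable {R : Type*} [Ring R]

lemma neg_one_pow_choose_two (k : ℕ) :
    (-1 : R) ^ k.choose 2 = if k % 4 = 2 ∨ k % 4 = 3 then -1 else 1 := by
  match k with
  | 0 | 1 | 2 => simp
  | 3 => simp [Nat.choose, pow_succ]
  | k + 4 =>
    have choose_add_four : (k + 4).choose 2 = k.choose 2 + 2 * (2 * k + 3) := by
      simp only [Nat.choose_succ_succ', Nat.choose_zero_right, Nat.choose_one_right,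
        zero_add, Nat.reduceAdd]
      ring
    rw [choose_add_four, pow_add, pow_mul, neg_one_sq, one_pow, mul_one,
      neg_one_pow_choose_two k, Nat.add_mod_right]

lemma neg_one_pow_succ_choose_two (k : ℕ) :
    (-1 : R) ^ (k + 1).choose 2 = if k % 4 = 1 ∨ k % 4 = 2 then -1 else 1 := by
  rw [neg_one_pow_choose_two]
  exact if_congr (by lia) rfl rfl

lemma sum_ite_neg_one_smul {α M : Type*} [AddCommGroup M] [Module R M] (s : Finset α)
    (p : α → Prop) [DecidablePred p] (x : α → M) :
    ∑ a ∈ s, (if p a then -1 else 1 : R) • x a =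
      ∑ a ∈ s, x a - (2 : R) • ∑ a ∈ s with p a, x a := by
  rw [Finset.sum_filter, Finset.smul_sum, ← Finset.sum_sub_distrib]
  refine Finset.sum_congr rfl fun a _ => ?_
  split_ifs
  · rw [neg_one_smul, two_smul, sub_add_cancel_left]
  · rw [one_smul, smul_zero, sub_zero]

end Sign

section OrthogonalProducts

variable {R M : Type*} [CommRing R] [AddCommGroup M] [Module R M] {q : QuadraticForm R M}

lemma ι_mul_prod_map_ι_of_forall_isOrtho {v : M} {l : List M} (h : ∀ w ∈ l, q.IsOrtho v w) :
    ι q v * (l.map (ι q)).prod = involute (l.map (ι q)).prod * ι q v := by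
  induction l with
  | nil => simp
  | cons w l ih =>
    rw [List.forall_mem_cons] at h
    rw [List.map_cons, List.prod_cons, ι_mul_ι_mul_of_isOrtho _ h.1, ih h.2, map_mul, involute_ι,
      neg_mul, neg_mul, mul_assoc]

lemma ι_mul_prod_map_ι_of_mem {v : M} {l : List M} (hl : l.Pairwise q.IsOrtho) (hv : v ∈ l) :
    ι q v * (l.map (ι q)).prod = -(involute (l.map (ι q)).prod * ι q v) := by
  induction l with
  | nil => simp at hv
  | cons w l ih =>
    rw [List.pairwise_cons] at hl
    rw [List.map_cons, List.prod_cons, map_mul, involute_ι, neg_mul, neg_mul, neg_neg, mul_assoc]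
    rcases List.mem_cons.1 hv with rfl | hvl
    · rw [ι_mul_prod_map_ι_of_forall_isOrtho hl.1]
    · rw [ι_mul_ι_mul_of_isOrtho _ (hl.1 v hvl).symm, ih hl.2 hvl, mul_neg, neg_neg]

lemma reverse_prod_map_ι_of_pairwise_isOrtho {l : List M} (hl : l.Pairwise q.IsOrtho) :
    reverse (l.map (ι q)).prod = (-1 : R) ^ l.length.choose 2 • (l.map (ι q)).prod := by
  induction l with
  | nil => simp
  | cons w l ih =>
    rw [List.pairwise_cons] at hl
    have anticomm : (l.map (ι q)).prod * ι q w =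
        (-1 : R) ^ l.length • (ι q w * (l.map (ι q)).prod) := by
      rw [ι_mul_prod_map_ι_of_forall_isOrtho hl.1, involute_prod_map_ι, smul_mul_assoc, smul_smul,
        ← mul_pow, neg_one_mul, neg_neg, one_pow, one_smul]
    rw [List.map_cons, List.prod_cons, reverse.map_mul, reverse_ι, ih hl.2, smul_mul_assoc,
      anticomm, smul_smul, ← pow_add, List.length_cons, Nat.choose_succ_succ', Nat.choose_one_right,
      add_comm]

end OrthogonalProducts

section BasisElements

variable {m : ℕ}

lemma isOrtho_Q_single {i j : Fin m} (h : i ≠ j) (a b : ℝ) :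
    (Q m).IsOrtho (Pi.single i a) (Pi.single j b) := by
  simp only [QuadraticMap.isOrtho_def, Q, QuadraticMap.weightedSumSquares_apply,
    ← Finset.sum_add_distrib]
  refine Finset.sum_congr rfl fun k _ => ?_
  rcases eq_or_ne k i with rfl | hk
  · simp [h]
  · simp [hk]

/-- The standard basis vectors of `ℝ^m` indexed by `A`, in increasing order of indices. -/
def basisList (A : Finset (Fin m)) : List (Fin m → ℝ) :=
  (A.sort (· ≤ ·)).map fun i => Pi.single i 1

lemma eA_eq_prod_map_ι (A : Finset (Fin m)) : eA m A = ((basisList A).map (ι (Q m))).prod := by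
  rw [basisList, List.map_map]
  rfl

lemma length_basisList (A : Finset (Fin m)) : (basisList A).length = A.card := by
  rw [basisList, List.length_map, Finset.length_sort]

lemma pairwise_isOrtho_basisList (A : Finset (Fin m)) : (basisList A).Pairwise (Q m).IsOrtho :=
  List.pairwise_map.2 ((A.sort_nodup _).imp fun h => isOrtho_Q_single h 1 1)

lemma reverse_eA (A : Finset (Fin m)) :
    reverse (eA m A) = (-1 : ℝ) ^ A.card.choose 2 • eA m A := by
  rw [eA_eq_prod_map_ι, reverse_prod_map_ι_of_pairwise_isOrtho (pairwise_isOrtho_basisList A),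
    length_basisList]

lemma involute_eA (A : Finset (Fin m)) : involute (eA m A) = (-1 : ℝ) ^ A.card • eA m A := by
  rw [eA_eq_prod_map_ι, involute_prod_map_ι, length_basisList]

lemma conjC_eA (A : Finset (Fin m)) :
    conjC (eA m A) = (-1 : ℝ) ^ (A.card + 1).choose 2 • eA m A := by
  rw [conjC, involute_eA, map_smul, reverse_eA, smul_smul, ← pow_add, Nat.choose_succ_succ',
    Nat.choose_one_right]

lemma involute_eA_eq_smul_conjC (A : Finset (Fin m)) :
    involute (eA m A) = (-1 : ℝ) ^ A.card.choose 2 • conjC (eA m A) := by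
  rw [conjC, reverse_involute, reverse_eA, map_smul, smul_smul, ← mul_pow, neg_one_mul, neg_neg,
    one_pow, one_smul]

lemma e_mul_eA_of_notMem {i : Fin m} {A : Finset (Fin m)} (hi : i ∉ A) :
    e m i * eA m A = involute (eA m A) * e m i := by
  have ortho : ∀ w ∈ basisList A, (Q m).IsOrtho (Pi.single i 1) w := by
    simp only [basisList, List.forall_mem_map, Finset.mem_sort]
    exact fun j hj => isOrtho_Q_single (ne_of_mem_of_not_mem hj hi).symm 1 1
  rw [eA_eq_prod_map_ι]
  exact ι_mul_prod_map_ι_of_forall_isOrtho ortho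

lemma e_mul_eA_of_mem {i : Fin m} {A : Finset (Fin m)} (hi : i ∈ A) :
    e m i * eA m A = -(involute (eA m A) * e m i) := by
  rw [eA_eq_prod_map_ι]
  exact ι_mul_prod_map_ι_of_mem (pairwise_isOrtho_basisList A)
    (List.mem_map_of_mem ((Finset.mem_sort _).2 hi))

lemma e_mul_eA (i : Fin m) (A : Finset (Fin m)) :
    e m i * eA m A =
      (if (i ∉ A ∧ (A.card % 4 = 2 ∨ A.card % 4 = 3)) ∨
          (i ∈ A ∧ (A.card % 4 = 0 ∨ A.card % 4 = 1)) then -1 else 1 : ℝ) •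
        (conjC (eA m A) * e m i) := by
  by_cases hi : i ∈ A
  · rw [e_mul_eA_of_mem hi, involute_eA_eq_smul_conjC, neg_one_pow_choose_two, smul_mul_assoc,
      ← neg_smul, neg_ite, neg_neg, ← ite_not]
    exact congrArg (· • _) (if_congr (by lia) rfl rfl)
  · rw [e_mul_eA_of_notMem hi, involute_eA_eq_smul_conjC, neg_one_pow_choose_two, smul_mul_assoc]
    exact congrArg (· • _) (if_congr (by lia) rfl rfl)

lemma sum_smul_eA (c : Finset (Fin m) → ℝ) :
    ∑ A, c A • eA m A = ∑ A, c A • conjC (eA m A) +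
      (2 : ℝ) • ∑ A with A.card % 4 = 1 ∨ A.card % 4 = 2, c A • eA m A := by
  simp only [conjC_eA, neg_one_pow_succ_choose_two, smul_comm (c _), sum_ite_neg_one_smul,
    sub_add_cancel]

lemma e_mul_sum_smul_eA (c : Finset (Fin m) → ℝ) (i : Fin m) :
    e m i * ∑ A, c A • eA m A = (∑ A, c A • conjC (eA m A)) * e m i -
      (2 : ℝ) • ∑ A with (i ∉ A ∧ (A.card % 4 = 2 ∨ A.card % 4 = 3)) ∨
        (i ∈ A ∧ (A.card % 4 = 0 ∨ A.card % 4 = 1)), c A • (conjC (eA m A) * e m i) := by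
  simp only [Finset.mul_sum, mul_smul_comm, e_mul_eA, smul_comm (c _), sum_ite_neg_one_smul,
    Finset.sum_mul, smul_mul_assoc]

end BasisElements

section Derivatives

lemma symm_fderiv_mul {𝕜 R E F : Type*} [NontriviallyNormedField 𝕜] [CompleteSpace 𝕜]
    [NonUnitalNonAssocRing R] [Module 𝕜 R] [IsScalarTower 𝕜 R R] [SMulCommClass 𝕜 R R]
    [NormedAddCommGroup E] [NormedSpace 𝕜 E] [FiniteDimensional 𝕜 E]
    [NormedAddCommGroup F] [NormedSpace 𝕜 F] (ψ : R ≃ₗ[𝕜] E) {f g : F → R} {z : F}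
    (hf : DifferentiableAt 𝕜 (fun w => ψ (f w)) z) (hg : DifferentiableAt 𝕜 (fun w => ψ (g w)) z)
    (v : F) :
    ψ.symm (fderiv 𝕜 (fun w => ψ (f w * g w)) z v) =
      ψ.symm (fderiv 𝕜 (fun w => ψ (f w)) z v) * g z +
        f z * ψ.symm (fderiv 𝕜 (fun w => ψ (g w)) z v) := by
  let B : E →L[𝕜] E →L[𝕜] E := LinearMap.toContinuousBilinearMap
    (((LinearMap.mul 𝕜 R).compl₁₂ ψ.symm.toLinearMap ψ.symm.toLinearMap).compr₂ ψ.toLinearMap)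
  have B_apply (x y : E) : B x y = ψ (ψ.symm x * ψ.symm y) := rfl
  have mul_eq : (fun w => ψ (f w * g w)) = fun w => B (ψ (f w)) (ψ (g w)) := by
    simp only [B_apply, LinearEquiv.symm_apply_apply]
  rw [mul_eq, (B.hasFDerivAt_of_bilinear hf.hasFDerivAt hg.hasFDerivAt).fderiv]
  simp [B_apply, add_comm]

variable {m : ℕ} {ψ : Cl m ≃ₗ[ℝ] EuclideanSpace ℝ (Fin (2 ^ m))}
  {f g : (Fin (m + 1) → ℝ) → Cl m} {z : Fin (m + 1) → ℝ}

lemma pd_mul (hf : DifferentiableAt ℝ (fun w => ψ (f w)) z)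
    (hg : DifferentiableAt ℝ (fun w => ψ (g w)) z) (i : Fin (m + 1)) :
    pd m ψ i (fun w => f w * g w) z = pd m ψ i f z * g z + f z * pd m ψ i g z :=
  symm_fderiv_mul ψ hf hg _

lemma differentiableAt_sum_smul_eA {fA : Finset (Fin m) → (Fin (m + 1) → ℝ) → ℝ}
    (hfA : ∀ A, DifferentiableAt ℝ (fA A) z) (hf : ∀ w, f w = ∑ A, fA A w • eA m A) :
    DifferentiableAt ℝ (fun w => ψ (f w)) z := by
  simp only [hf, map_sum, map_smul]
  exact DifferentiableAt.fun_sum fun A _ => (hfA A).smul_const _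

variable (m ψ) in
/-- The Dirac operator `h ↦ ∑ᵢ eᵢ (∂ᵢ h)`, the part that `D` and `D̄` contain with opposite
signs. -/
def diracOp (h : (Fin (m + 1) → ℝ) → Cl m) (z : Fin (m + 1) → ℝ) : Cl m :=
  ∑ i : Fin m, e m i * pd m ψ i.succ h z

lemma diracOp_mul (hf : DifferentiableAt ℝ (fun w => ψ (f w)) z)
    (hg : DifferentiableAt ℝ (fun w => ψ (g w)) z) {c : Finset (Fin m) → ℝ}
    (hc : f z = ∑ A, c A • eA m A) :
    diracOp m ψ (fun w => f w * g w) z =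
      diracOp m ψ f z * g z + (∑ A, c A • conjC (eA m A)) * diracOp m ψ g z -
        (2 : ℝ) • ∑ i : Fin m, ∑ A with (i ∉ A ∧ (A.card % 4 = 2 ∨ A.card % 4 = 3)) ∨
          (i ∈ A ∧ (A.card % 4 = 0 ∨ A.card % 4 = 1)),
            c A • (conjC (eA m A) * (e m i * pd m ψ i.succ g z)) := by
  have leibniz (i : Fin m) : e m i * pd m ψ i.succ (fun w => f w * g w) z =
      e m i * pd m ψ i.succ f z * g z +
        (∑ A, c A • conjC (eA m A)) * (e m i * pd m ψ i.succ g z) -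
        (2 : ℝ) • ∑ A with (i ∉ A ∧ (A.card % 4 = 2 ∨ A.card % 4 = 3)) ∨
          (i ∈ A ∧ (A.card % 4 = 0 ∨ A.card % 4 = 1)),
            c A • (conjC (eA m A) * (e m i * pd m ψ i.succ g z)) := by
    rw [pd_mul hf hg, mul_add, ← mul_assoc, ← mul_assoc, hc, e_mul_sum_smul_eA, sub_mul,
      smul_mul_assoc, Finset.sum_mul (Finset.filter _ _)]
    simp only [smul_mul_assoc, mul_assoc, add_sub_assoc]
  rw [diracOp, Finset.sum_congr rfl fun i _ => leibniz i, Finset.sum_sub_distrib,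
    Finset.sum_add_distrib, ← Finset.sum_mul, ← Finset.mul_sum, ← Finset.smul_sum]
  rfl

end Derivatives

theorem generalized_product_rule_general (m : ℕ)
    (ψ : Cl m ≃ₗ[ℝ] EuclideanSpace ℝ (Fin (2 ^ m)))
    (fA : Finset (Fin m) → (Fin (m + 1) → ℝ) → ℝ)
    (f fbar : (Fin (m + 1) → ℝ) → Cl m)
    (hf : ∀ w, f w = ∑ A : Finset (Fin m), fA A w • eA m A)
    (hfbar : ∀ w, fbar w = ∑ A : Finset (Fin m), fA A w • conjC (eA m A))
    (g : (Fin (m + 1) → ℝ) → Cl m) (z : Fin (m + 1) → ℝ)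
    (hfA : ∀ A, DifferentiableAt ℝ (fA A) z)
    (hg : DifferentiableAt ℝ (fun w => ψ (g w)) z) :
    Dop m ψ (fun w => f w * g w) z =
      Dop m ψ f z * g z + fbar z * Dop m ψ g z +
        (2 : ℝ) • ((∑ A ∈ Finset.univ.filter
            (fun A : Finset (Fin m) => A.card % 4 = 1 ∨ A.card % 4 = 2),
            fA A z • eA m A) * pd m ψ 0 g z) -
        (2 : ℝ) • ∑ i : Fin m, ∑ A ∈ Finset.univ.filter
            (fun A : Finset (Fin m) =>
              (i ∉ A ∧ (A.card % 4 = 2 ∨ A.card % 4 = 3)) ∨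
              (i ∈ A ∧ (A.card % 4 = 0 ∨ A.card % 4 = 1))),
            fA A z • (conjC (eA m A) * (e m i * pd m ψ i.succ g z)) ∧
    Dbar m ψ (fun w => f w * g w) z =
      Dbar m ψ f z * g z + fbar z * Dbar m ψ g z +
        (2 : ℝ) • ((∑ A ∈ Finset.univ.filter
            (fun A : Finset (Fin m) => A.card % 4 = 1 ∨ A.card % 4 = 2),
            fA A z • eA m A) * pd m ψ 0 g z) +
        (2 : ℝ) • ∑ i : Fin m, ∑ A ∈ Finset.univ.filter
            (fun A : Finset (Fin m) =>
              (i ∉ A ∧ (A.card % 4 = 2 ∨ A.card % 4 = 3)) ∨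
              (i ∈ A ∧ (A.card % 4 = 0 ∨ A.card % 4 = 1))),
            fA A z • (conjC (eA m A) * (e m i * pd m ψ i.succ g z)) := by
  have hf_diff : DifferentiableAt ℝ (fun w => ψ (f w)) z := differentiableAt_sum_smul_eA hfA hf
  have Dop_eq (h) : Dop m ψ h z = pd m ψ 0 h z + diracOp m ψ h z := rfl
  have Dbar_eq (h) : Dbar m ψ h z = pd m ψ 0 h z - diracOp m ψ h z := rfl
  have pd_zero_mul := pd_mul hf_diff hg 0
  rw [hf, sum_smul_eA, ← hfbar, add_mul, smul_mul_assoc] at pd_zero_mul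
  have dirac_mul := diracOp_mul hf_diff hg (hf z)
  rw [← hfbar] at dirac_mul
  simp only [Dop_eq, Dbar_eq, pd_zero_mul, dirac_mul, add_mul, sub_mul, mul_add, mul_sub]
  constructor <;> abel

/-- Generalized product rule: for `f = ∑_A f_A e_A` with real-valued `C¹` coefficients and
a `C¹` function `g` on the open set `G ⊆ ℝ^{m+1}`, with `f̄ = ∑_A f_A conj(e_A)`, on `G`:
`D(fg) = (Df)g + f̄(Dg) + 2(∑_{|A|≡1,2 (4)} f_A e_A)(∂₀g)
        - 2 ∑ᵢ ∑_{(i∉A ∧ |A|≡2,3 (4)) ∨ (i∈A ∧ |A|≡0,1 (4))} f_A conj(e_A) eᵢ (∂ᵢ g)`, and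
`D̄(fg) = (D̄f)g + f̄(D̄g) + 2(∑_{|A|≡1,2 (4)} f_A e_A)(∂₀g)
        + 2 ∑ᵢ ∑_{(i∉A ∧ |A|≡2,3 (4)) ∨ (i∈A ∧ |A|≡0,1 (4))} f_A conj(e_A) eᵢ (∂ᵢ g)`. -/
theorem generalized_product_rule (m : ℕ) (hm : 1 ≤ m)
    (ψ : Cl m ≃ₗ[ℝ] EuclideanSpace ℝ (Fin (2 ^ m)))
    (G : Set (Fin (m + 1) → ℝ)) (hG : IsOpen G)
    (fA : Finset (Fin m) → (Fin (m + 1) → ℝ) → ℝ)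
    (hfA : ∀ A, ContDiffOn ℝ 1 (fA A) G)
    (f fbar : (Fin (m + 1) → ℝ) → Cl m)
    (hf : ∀ z, f z = ∑ A : Finset (Fin m), fA A z • eA m A)
    (hfbar : ∀ z, fbar z = ∑ A : Finset (Fin m), fA A z • conjC (eA m A))
    (g : (Fin (m + 1) → ℝ) → Cl m) (hg : ClContDiffOn m ψ 1 g G) :
    ∀ z ∈ G,
      Dop m ψ (fun w => f w * g w) z =
        Dop m ψ f z * g z + fbar z * Dop m ψ g z +
          (2 : ℝ) • ((∑ A ∈ Finset.univ.filter
              (fun A : Finset (Fin m) => A.card % 4 = 1 ∨ A.card % 4 = 2),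
              fA A z • eA m A) * pd m ψ 0 g z) -
          (2 : ℝ) • ∑ i : Fin m, ∑ A ∈ Finset.univ.filter
              (fun A : Finset (Fin m) =>
                (i ∉ A ∧ (A.card % 4 = 2 ∨ A.card % 4 = 3)) ∨
                (i ∈ A ∧ (A.card % 4 = 0 ∨ A.card % 4 = 1))),
              fA A z • (conjC (eA m A) * (e m i * pd m ψ i.succ g z)) ∧
      Dbar m ψ (fun w => f w * g w) z =
        Dbar m ψ f z * g z + fbar z * Dbar m ψ g z +
          (2 : ℝ) • ((∑ A ∈ Finset.univ.filter
              (fun A : Finset (Fin m) => A.card % 4 = 1 ∨ A.card % 4 = 2),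
              fA A z • eA m A) * pd m ψ 0 g z) +
          (2 : ℝ) • ∑ i : Fin m, ∑ A ∈ Finset.univ.filter
              (fun A : Finset (Fin m) =>
                (i ∉ A ∧ (A.card % 4 = 2 ∨ A.card % 4 = 3)) ∨
                (i ∈ A ∧ (A.card % 4 = 0 ∨ A.card % 4 = 1))),
              fA A z • (conjC (eA m A) * (e m i * pd m ψ i.succ g z)) := by
  intro z hz
  exact generalized_product_rule_general m ψ fA f fbar hf hfbar g z
    (fun A => ((hfA A).contDiffAt (hG.mem_nhds hz)).differentiableAt one_ne_zero)
    ((ContDiffOn.contDiffAt hg (hG.mem_nhds hz)).differentiableAt (by norm_num))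
end
end

section
/- (Monogenicity of the Cauchy kernel.) Let m ≥ 1 and define E : ℝ^{m+1} \ {0} → Cl_{0,m} by E(z) = ‖z‖^{−(m+1)} · p̄(z), where p̄(z) = z₀·1 − ∑_{i=1}^m z_i e_i and ‖z‖ is the Euclidean norm of z ∈ ℝ^{m+1}. Then E is left monogenic on ℝ^{m+1} \ {0}, i.e. D E = 0 there. -/
/-!
For scalar `f`, the Leibniz rule reads `D (f h) = f D h + (∇f) h`, with the gradient viewed as a
paravector. For `f(z) = g(‖z‖²)` the gradient is `2 g'(‖z‖²) z`, while `D p̄ = m + 1` and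
`z p̄(z) = ‖z‖²`; hence `D (f p̄) = (m + 1) g(‖z‖²) + 2 ‖z‖² g'(‖z‖²)`. In particular
`D (‖z‖⁻ⁿ p̄) = (m + 1 - n) ‖z‖⁻ⁿ`, and `n = m + 1` is the exponent for which this vanishes.
-/

noncomputable section
open CliffordAlgebra

/-- The conjugate paravector `p̄(z) = z₀·1 - ∑ᵢ zᵢ eᵢ` of `z ∈ ℝ^{m+1}`. -/
def pbar (m : ℕ) (z : Fin (m + 1) → ℝ) : Cl m :=
  algebraMap ℝ (Cl m) (z 0) - ∑ i : Fin m, z i.succ • e m i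

section CliffordIdentities

variable (m : ℕ)

lemma sum_smul_e (v : Fin m → ℝ) : ∑ i, v i • e m i = ι (Q m) v := by
  simp only [e, ← map_smul, ← map_sum, ← Pi.single_smul', smul_eq_mul, mul_one]
  rw [Finset.univ_sum_single]

lemma Q_apply (v : Fin m → ℝ) : Q m v = -∑ i, v i ^ 2 := by
  simp [Q, QuadraticMap.weightedSumSquares_apply, sq]

lemma e_mul_self (i : Fin m) : e m i * e m i = -1 := by
  simp [e, ι_sq_scalar, Q_apply, Pi.single_apply]

/-- The embedding `z ↦ z₀·1 + ∑ᵢ zᵢ eᵢ` of `ℝ^{m+1}` into `Cl_{0,m}` as the space of paravectors;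
it carries gradients of scalar functions in the Leibniz rule for `Dop`. -/
def paravector : (Fin (m + 1) → ℝ) →ₗ[ℝ] Cl m :=
  Algebra.linearMap ℝ (Cl m) ∘ₗ LinearMap.proj 0 + ι (Q m) ∘ₗ LinearMap.funLeft ℝ ℝ Fin.succ

/-- The conjugate paravector map `pbar` bundled as a linear map, so that it can be differentiated
as one. -/
def pbarLinearMap : (Fin (m + 1) → ℝ) →ₗ[ℝ] Cl m :=
  Algebra.linearMap ℝ (Cl m) ∘ₗ LinearMap.proj 0 - ι (Q m) ∘ₗ LinearMap.funLeft ℝ ℝ Fin.succ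

lemma paravector_apply (z : Fin (m + 1) → ℝ) :
    paravector m z = algebraMap ℝ (Cl m) (z 0) + ι (Q m) (fun i => z i.succ) :=
  rfl

lemma pbar_eq (z : Fin (m + 1) → ℝ) :
    pbar m z = algebraMap ℝ (Cl m) (z 0) - ι (Q m) (fun i => z i.succ) := by
  rw [pbar, sum_smul_e m fun i => z i.succ]

lemma coe_pbarLinearMap : ⇑(pbarLinearMap m) = pbar m :=
  funext fun z => (pbar_eq m z).symm

lemma paravector_mul_pbar (z : Fin (m + 1) → ℝ) :
    paravector m z * pbar m z = algebraMap ℝ (Cl m) (∑ j, z j ^ 2) := by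
  have hcomm : Commute (algebraMap ℝ (Cl m) (z 0)) (ι (Q m) fun i => z i.succ) :=
    Algebra.commutes _ _
  rw [paravector_apply, pbar_eq, ← hcomm.mul_self_sub_mul_self_eq, ι_sq_scalar, Q_apply,
    ← map_mul, ← map_sub, sub_neg_eq_add, ← sq, Fin.sum_univ_succ]

end CliffordIdentities

section CauchyRiemann

variable {m : ℕ} (ψ : Cl m ≃ₗ[ℝ] EuclideanSpace ℝ (Fin (2 ^ m)))

lemma pd_linearMap (L : (Fin (m + 1) → ℝ) →ₗ[ℝ] Cl m) (i : Fin (m + 1)) (z : Fin (m + 1) → ℝ) :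
    pd m ψ i L z = L (Pi.single i 1) := by
  have hL : HasFDerivAt (fun w => ψ (L w)) (ψ.toLinearMap ∘ₗ L).toContinuousLinearMap z :=
    (ψ.toLinearMap ∘ₗ L).toContinuousLinearMap.hasFDerivAt
  rw [pd, hL.fderiv]
  exact ψ.symm_apply_apply _

lemma pd_smul {f : (Fin (m + 1) → ℝ) → ℝ} {f' : (Fin (m + 1) → ℝ) →L[ℝ] ℝ}
    {h : (Fin (m + 1) → ℝ) → Cl m} {z : Fin (m + 1) → ℝ} (hf : HasFDerivAt f f' z)
    (hh : DifferentiableAt ℝ (fun w => ψ (h w)) z) (i : Fin (m + 1)) :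
    pd m ψ i (fun w => f w • h w) z = f z • pd m ψ i h z + f' (Pi.single i 1) • h z := by
  simp only [pd, map_smul]
  rw [(hf.fun_smul hh.hasFDerivAt).fderiv]
  simp

lemma Dop_smul {f : (Fin (m + 1) → ℝ) → ℝ} {f' : (Fin (m + 1) → ℝ) →L[ℝ] ℝ}
    {h : (Fin (m + 1) → ℝ) → Cl m} {z : Fin (m + 1) → ℝ} (hf : HasFDerivAt f f' z)
    (hh : DifferentiableAt ℝ (fun w => ψ (h w)) z) :
    Dop m ψ (fun w => f w • h w) z =
      f z • Dop m ψ h z + paravector m (fun i => f' (Pi.single i 1)) * h z := by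
  simp only [Dop, pd_smul ψ hf hh, paravector_apply, ← sum_smul_e, mul_add, mul_smul_comm,
    Finset.sum_add_distrib, add_mul, Finset.sum_mul, smul_mul_assoc, smul_add, Finset.smul_sum,
    Algebra.algebraMap_eq_smul_one, one_mul]
  abel

lemma differentiable_pbar : Differentiable ℝ fun w => ψ (pbar m w) := by
  rw [← coe_pbarLinearMap]
  exact (ψ.toLinearMap ∘ₗ pbarLinearMap m).toContinuousLinearMap.differentiable

lemma Dop_pbar (z : Fin (m + 1) → ℝ) : Dop m ψ (pbar m) z = algebraMap ℝ (Cl m) (m + 1) := by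
  have hpd (i) : pd m ψ i (pbar m) z = pbar m (Pi.single i 1) := by
    rw [← coe_pbarLinearMap, pd_linearMap]
  have hzero : pbar m (Pi.single 0 1) = 1 := by simp [pbar]
  have hsucc (i : Fin m) : pbar m (Pi.single i.succ 1) = -e m i := by
    simp [pbar, Pi.single_apply]
  simp [Dop, hpd, hzero, hsucc, e_mul_self, add_comm]

end CauchyRiemann

section RadialFunctions

lemma sum_sq_pos {κ R : Type*} [Fintype κ] [Ring R] [LinearOrder R] [IsStrictOrderedRing R]
    {v : κ → R} (hv : v ≠ 0) : 0 < ∑ j, v j ^ 2 := by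
  obtain ⟨j, hj⟩ := Function.ne_iff.1 hv
  exact Finset.sum_pos' (fun _ _ => sq_nonneg _) ⟨j, Finset.mem_univ j, sq_pos_of_ne_zero hj⟩

lemma hasFDerivAt_sum_sq {κ : Type*} [Fintype κ] (v : κ → ℝ) :
    HasFDerivAt (fun w : κ → ℝ => ∑ j, w j ^ 2)
      (∑ j, (2 * v j) • ContinuousLinearMap.proj (R := ℝ) (φ := fun _ => ℝ) j) v :=
  HasFDerivAt.fun_sum fun j _ => by
    simpa using (hasFDerivAt_apply (𝕜 := ℝ) j v).pow (𝔸 := ℝ) 2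

lemma hasDerivAt_inv_sqrt_pow (n : ℕ) {t : ℝ} (ht : 0 < t) :
    HasDerivAt (fun s => (√s)⁻¹ ^ n) (-(n / 2) * (√t)⁻¹ ^ n / t) t := by
  have hs : √t ≠ 0 := (Real.sqrt_pos.2 ht).ne'
  refine (((Real.hasDerivAt_sqrt ht.ne').fun_inv hs).fun_pow n).congr_deriv ?_
  rcases n with _ | k
  · simp
  · have hpow : (√t)⁻¹ ^ (k + 1) = (√t)⁻¹ ^ k / √t := by rw [pow_succ, div_eq_mul_inv]
    rw [Nat.add_sub_cancel, hpow, Real.sq_sqrt ht.le]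
    ring

lemma Dop_radial_smul_pbar {m : ℕ} (ψ : Cl m ≃ₗ[ℝ] EuclideanSpace ℝ (Fin (2 ^ m)))
    {g : ℝ → ℝ} {g' : ℝ} {z : Fin (m + 1) → ℝ} (hg : HasDerivAt g g' (∑ j, z j ^ 2)) :
    Dop m ψ (fun w => g (∑ j, w j ^ 2) • pbar m w) z =
      algebraMap ℝ (Cl m) ((m + 1) * g (∑ j, z j ^ 2) + 2 * (∑ j, z j ^ 2) * g') := by
  have hf := hg.comp_hasFDerivAt z (hasFDerivAt_sum_sq z)
  have hgrad : (fun i => (g' • ∑ j, (2 * z j) • ContinuousLinearMap.proj (R := ℝ)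
      (φ := fun _ => ℝ) j) (Pi.single i 1)) = (2 * g') • z := by
    ext i
    simp [Pi.single_apply, mul_left_comm, mul_assoc]
  calc Dop m ψ (fun w => g (∑ j, w j ^ 2) • pbar m w) z
    _ = g (∑ j, z j ^ 2) • Dop m ψ (pbar m) z + paravector m ((2 * g') • z) * pbar m z := by
      rw [← hgrad]
      exact Dop_smul ψ hf (differentiable_pbar ψ z)
    _ = _ := by
      rw [Dop_pbar, map_smul, smul_mul_assoc, paravector_mul_pbar]
      simp only [Algebra.smul_def, ← map_mul, ← map_add]
      congr 1
      ring

lemma Dop_inv_norm_pow_smul_pbar {m : ℕ} (ψ : Cl m ≃ₗ[ℝ] EuclideanSpace ℝ (Fin (2 ^ m))) (n : ℕ)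
    {z : Fin (m + 1) → ℝ} (hz : z ≠ 0) :
    Dop m ψ (fun w => (√(∑ j, w j ^ 2))⁻¹ ^ n • pbar m w) z =
      algebraMap ℝ (Cl m) ((m + 1 - n) * (√(∑ j, z j ^ 2))⁻¹ ^ n) := by
  have hr : 0 < ∑ j, z j ^ 2 := sum_sq_pos hz
  rw [Dop_radial_smul_pbar ψ (hasDerivAt_inv_sqrt_pow n hr)]
  congr 1
  field_simp
  ring

end RadialFunctions

/-- Monogenicity of the Cauchy kernel: `E(z) = ‖z‖^{-(m+1)} p̄(z)` (with `‖·‖` the Euclidean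
norm) is left monogenic on `ℝ^{m+1} \ {0}`. -/
theorem cauchy_kernel_monogenic (m : ℕ) (hm : 1 ≤ m)
    (ψ : Cl m ≃ₗ[ℝ] EuclideanSpace ℝ (Fin (2 ^ m)))
    (E : (Fin (m + 1) → ℝ) → Cl m)
    (hE : ∀ z, E z = ((Real.sqrt (∑ j, z j ^ 2))⁻¹ ^ (m + 1)) • pbar m z) :
    ∀ z : Fin (m + 1) → ℝ, z ≠ 0 → Dop m ψ E z = 0 := by
  intro z hz
  obtain rfl : E = fun w => (√(∑ j, w j ^ 2))⁻¹ ^ (m + 1) • pbar m w := funext hE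
  rw [Dop_inv_norm_pow_smul_pbar ψ (m + 1) hz, Nat.cast_succ, sub_self, zero_mul, map_zero]
end
end

section
/- (Unique nearest boundary point near a C² boundary.) Let n ≥ 1 and let U ⊆ ℝⁿ be a nonempty bounded open set with C² boundary, in the sense that there is a twice continuously differentiable function φ : ℝⁿ → ℝ with U = {x : φ(x) < 0}, frontier U = {x : φ(x) = 0}, and the derivative of φ nonvanishing at every point of frontier U. Then there exists an open set W ⊆ ℝⁿ containing frontier U such that for every z ∈ U ∩ W there is a unique point P ∈ frontier U with ‖z − P‖ = infDist(z, frontier U), i.e. a unique point of frontier U of shortest Euclidean distance to z. -/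
/-!
If `P` is a point of a level set of `f` nearest to `z`, then by Lagrange multipliers
`z - P = r • ∇f(P)`. For another point `Q` of the level set, `f Q - f P = 0`, so if `∇f` is
`K`-Lipschitz then `|⟪∇f(P), Q - P⟫| ≤ K ‖Q - P‖ ^ 2`: the level set is quadratically close to its
tangent space at `P`. Expanding the square,
`‖z - Q‖ ^ 2 = ‖z - P‖ ^ 2 - 2 r ⟪∇f(P), Q - P⟫ + ‖Q - P‖ ^ 2`,
and the last term beats the middle one as soon as `2 |r| K < 1`, that is
`2 K ‖z - P‖ < ‖∇f(P)‖`. Since `∇f` does not vanish, this holds for all `z` close to the level set.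
-/

open Metric Topology
open scoped NNReal

section NearestPoint

variable {α : Type*} [PseudoMetricSpace α] {s : Set α} {z p P Q : α}

/-- `P` is a point of `s` at the shortest distance from `z` (a metric projection of `z` onto `s`).
Minimality of `dist z P` over `s` is encoded as equality with `infDist z s`. -/
def IsNearestPoint (s : Set α) (z P : α) : Prop :=
  P ∈ s ∧ dist z P = infDist z s

namespace IsNearestPoint

theorem dist_le (hP : IsNearestPoint s z P) (hp : p ∈ s) : dist z P ≤ dist z p :=
  hP.2.trans_le (infDist_le_dist_of_mem hp)

theorem dist_eq (hP : IsNearestPoint s z P) (hQ : IsNearestPoint s z Q) : dist z P = dist z Q :=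
  hP.2.trans hQ.2.symm

theorem dist_le_two_mul (hP : IsNearestPoint s z P) (hp : p ∈ s) : dist P p ≤ 2 * dist z p := by
  linarith [dist_triangle_left P p z, hP.dist_le hp]

end IsNearestPoint

theorem exists_isNearestPoint_of_isClosed [ProperSpace α] (hs : IsClosed s) (hne : s.Nonempty)
    (z : α) : ∃ P, IsNearestPoint s z P := by
  obtain ⟨P, hP, hPd⟩ := hs.exists_infDist_eq_dist hne z
  exact ⟨P, hP, hPd.symm⟩

end NearestPoint

section Taylor

variable {𝕜 E F : Type*} [RCLike 𝕜] [NormedAddCommGroup E] [NormedSpace ℝ E] [NormedSpace 𝕜 E]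
  [NormedAddCommGroup F] [NormedSpace 𝕜 F]

theorem norm_image_sub_sub_fderiv_le_of_lipschitzOnWith_fderiv {f : E → F} {s : Set E} {K : ℝ≥0}
    {x y : E} (hf : ∀ w ∈ s, DifferentiableAt 𝕜 f w) (hf' : LipschitzOnWith K (fderiv 𝕜 f) s)
    (hs : Convex ℝ s) (hx : x ∈ s) (hy : y ∈ s) :
    ‖f y - f x - fderiv 𝕜 f x (y - x)‖ ≤ K * ‖y - x‖ ^ 2 := by
  have hseg : segment ℝ x y ⊆ s := hs.segment_subset hx hy
  have hbound : ∀ w ∈ segment ℝ x y, ‖fderiv 𝕜 f w - fderiv 𝕜 f x‖ ≤ K * ‖y - x‖ := fun w hw =>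
    calc ‖fderiv 𝕜 f w - fderiv 𝕜 f x‖ ≤ K * ‖w - x‖ := hf'.norm_sub_le (hseg hw) hx
      _ ≤ K * ‖y - x‖ := by gcongr; exact norm_sub_le_of_mem_segment hw
  calc ‖f y - f x - fderiv 𝕜 f x (y - x)‖ ≤ K * ‖y - x‖ * ‖y - x‖ :=
        (convex_segment x y).norm_image_sub_le_of_norm_fderiv_le' (fun w hw => hf w (hseg hw))
          hbound (left_mem_segment ℝ x y) (right_mem_segment ℝ x y)
    _ = K * ‖y - x‖ ^ 2 := by ring

end Taylor

section LevelSet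

variable {E : Type*} [NormedAddCommGroup E] [InnerProductSpace ℝ E] {f : E → ℝ} {c : ℝ}

theorem dist_lt_dist_iff_two_mul_inner_lt {z P Q : E} :
    dist z P < dist z Q ↔ 2 * inner ℝ (z - P) (Q - P) < ‖Q - P‖ ^ 2 := by
  have hexpand := norm_sub_sq_real (z - P) (Q - P)
  rw [sub_sub_sub_cancel_right] at hexpand
  rw [dist_eq_norm, dist_eq_norm, ← sq_lt_sq₀ (norm_nonneg _) (norm_nonneg _), hexpand]
  constructor <;> intro h <;> linarith

theorem exists_innerSL_eq_smul_of_isLocalMinOn_dist [CompleteSpace E]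
    {f' : StrongDual ℝ E} {z P : E} (hmin : IsLocalMinOn (dist z) {x | f x = f P} P)
    (hf : HasStrictFDerivAt f f' P) (hf' : f' ≠ 0) :
    ∃ r : ℝ, innerSL ℝ (z - P) = r • f' := by
  have hmin_sq : IsLocalMinOn (fun x => ‖z - x‖ ^ 2) {x | f x = f P} P := by
    filter_upwards [hmin] with x hx
    rw [dist_eq_norm, dist_eq_norm] at hx
    gcongr
  have hderiv : HasStrictFDerivAt (fun x => ‖z - x‖ ^ 2) (-(2 • innerSL ℝ (z - P))) P := by
    simpa using (hasStrictFDerivAt_norm_sq (z - P)).comp P ((hasStrictFDerivAt_id P).const_sub z)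
  obtain ⟨a, b, hab, h⟩ :=
    IsLocalExtrOn.exists_multipliers_of_hasStrictFDerivAt_1d (.inl hmin_sq) hf hderiv
  have hb : b ≠ 0 := by
    rintro rfl
    simp only [zero_smul, add_zero, smul_eq_zero, hf', or_false] at h
    exact hab (by rw [h, Prod.mk_zero_zero])
  refine ⟨a / (2 * b), ?_⟩
  have h2b : (2 * b) • innerSL ℝ (z - P) = a • f' := by
    rw [eq_comm, ← sub_eq_zero, ← h]
    module
  rw [div_eq_inv_mul, mul_smul, ← h2b, inv_smul_smul₀ (by positivity)]

theorem IsNearestPoint.dist_lt_dist_of_lipschitzOnWith_fderiv [CompleteSpace E]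
    {s : Set E} {K : ℝ≥0} {z P Q : E}
    (hP : IsNearestPoint (f ⁻¹' {c}) z P) (hQ : f Q = c) (hQP : Q ≠ P)
    (hs : Convex ℝ s) (hso : IsOpen s) (hPs : P ∈ s) (hQs : Q ∈ s)
    (hf : ∀ w ∈ s, DifferentiableAt ℝ f w) (hf' : LipschitzOnWith K (fderiv ℝ f) s)
    (hz : 2 * K * dist z P < ‖fderiv ℝ f P‖) : dist z P < dist z Q := by
  have hfPc : f P = c := hP.1
  have hfP : HasStrictFDerivAt f (fderiv ℝ f P) P := by
    refine hasStrictFDerivAt_of_hasFDerivAt_of_continuousAt ?_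
      (hf'.continuousOn.continuousAt (hso.mem_nhds hPs))
    filter_upwards [hso.mem_nhds hPs] with w hw using (hf w hw).hasFDerivAt
  have hgrad_pos : 0 < ‖fderiv ℝ f P‖ := hz.trans_le' (by positivity)
  obtain ⟨r, hr⟩ : ∃ r : ℝ, innerSL ℝ (z - P) = r • fderiv ℝ f P := by
    refine exists_innerSL_eq_smul_of_isLocalMinOn_dist ?_ hfP (norm_pos_iff.mp hgrad_pos)
    exact IsMinOn.localize fun x hx => hP.dist_le (hx.trans hfPc)
  have hdist : dist z P = |r| * ‖fderiv ℝ f P‖ := by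
    rw [dist_eq_norm, ← innerSL_apply_norm ℝ (z - P), hr, norm_smul, Real.norm_eq_abs]
  have hrK : 2 * |r| * K < 1 := by
    rw [hdist] at hz
    refine lt_of_mul_lt_mul_right ?_ hgrad_pos.le
    linarith
  have htangent : |fderiv ℝ f P (Q - P)| ≤ K * ‖Q - P‖ ^ 2 := by
    have h := norm_image_sub_sub_fderiv_le_of_lipschitzOnWith_fderiv hf hf' hs hPs hQs
    rwa [hQ, hfPc, sub_self, zero_sub, norm_neg, Real.norm_eq_abs] at h
  have hQP_pos : 0 < ‖Q - P‖ := norm_sub_pos_iff.mpr hQP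
  rw [dist_lt_dist_iff_two_mul_inner_lt]
  calc 2 * inner ℝ (z - P) (Q - P) = 2 * (r * fderiv ℝ f P (Q - P)) := by
        rw [← innerSL_apply_apply ℝ, hr, smul_apply, smul_eq_mul]
    _ ≤ 2 * (|r| * |fderiv ℝ f P (Q - P)|) := by
        rw [← abs_mul]
        gcongr
        exact le_abs_self _
    _ ≤ 2 * (|r| * (K * ‖Q - P‖ ^ 2)) := by gcongr
    _ = 2 * |r| * K * ‖Q - P‖ ^ 2 := by ring
    _ < ‖Q - P‖ ^ 2 := mul_lt_of_lt_one_left (by positivity) hrK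

theorem eventually_isNearestPoint_unique [CompleteSpace E] {p : E} {t : Set E} {K : ℝ≥0}
    (hf : ∀ᶠ x in 𝓝 p, DifferentiableAt ℝ f x) (ht : t ∈ 𝓝 p)
    (hf' : LipschitzOnWith K (fderiv ℝ f) t) (hp : f p = c) (hgrad : fderiv ℝ f p ≠ 0) :
    ∀ᶠ z in 𝓝 p, ∀ P Q, IsNearestPoint (f ⁻¹' {c}) z P → IsNearestPoint (f ⁻¹' {c}) z Q →
      Q = P := by
  obtain ⟨m, hm, hmp⟩ := exists_between (norm_pos_iff.mpr hgrad)
  have hgrad_near : ∀ᶠ x in 𝓝 p, m < ‖fderiv ℝ f x‖ :=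
    (hf'.continuousOn.continuousAt ht).norm.eventually_const_lt hmp
  obtain ⟨ε, hε, hball⟩ :=
    Metric.eventually_nhds_iff_ball.mp (hf.and (hgrad_near.and (Filter.eventually_mem_set.mpr ht)))
  have hdist_near : ∀ᶠ z in 𝓝 p, 2 * dist z p < ε :=
    Continuous.tendsto' (by fun_prop) p 0 (by simp) |>.eventually_lt_const hε
  have hmul_near : ∀ᶠ z in 𝓝 p, 2 * K * dist z p < m :=
    Continuous.tendsto' (by fun_prop) p 0 (by simp) |>.eventually_lt_const hm
  filter_upwards [hdist_near, hmul_near] with z hzε hzm P Q hP hQ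
  have hPball : P ∈ ball p ε := (hP.dist_le_two_mul hp).trans_lt hzε
  have hQball : Q ∈ ball p ε := (hQ.dist_le_two_mul hp).trans_lt hzε
  have hzP : 2 * K * dist z P < ‖fderiv ℝ f P‖ :=
    calc 2 * K * dist z P ≤ 2 * K * dist z p := by gcongr; exact hP.dist_le hp
      _ < m := hzm
      _ < ‖fderiv ℝ f P‖ := (hball P hPball).2.1
  by_contra hQP
  have hlt : dist z P < dist z Q :=
    hP.dist_lt_dist_of_lipschitzOnWith_fderiv hQ.1 hQP (convex_ball p ε) isOpen_ball hPball hQball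
      (fun x hx => (hball x hx).1) (hf'.mono fun x hx => (hball x hx).2.2) hzP
  exact hlt.ne (hP.dist_eq hQ)

theorem unique_nearest_boundary_point_general [ProperSpace E]
    (hf : Differentiable ℝ f) (hf' : LocallyLipschitz (fderiv ℝ f))
    (hgrad : ∀ x ∈ f ⁻¹' {c}, fderiv ℝ f x ≠ 0) :
    ∃ W : Set E, IsOpen W ∧ f ⁻¹' {c} ⊆ W ∧ ∀ z ∈ W, ∃! P, IsNearestPoint (f ⁻¹' {c}) z P := by
  refine eventually_nhdsSet_iff_exists.mp (eventually_nhdsSet_iff_forall.mpr fun p hp => ?_)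
  obtain ⟨K, t, ht, hK⟩ := hf' p
  filter_upwards [eventually_isNearestPoint_unique (.of_forall hf) ht hK hp (hgrad p hp)]
    with z hunique
  have hclosed : IsClosed (f ⁻¹' {c}) := isClosed_singleton.preimage hf.continuous
  obtain ⟨P, hP⟩ := exists_isNearestPoint_of_isClosed hclosed ⟨p, hp⟩ z
  exact ⟨P, hP, fun Q hQ => hunique P Q hP hQ⟩

end LevelSet

/-- Unique nearest boundary point near a `C²` boundary: if `U ⊆ ℝⁿ` is a nonempty bounded
open set with `C²` boundary (given by a `C²` defining function `φ` with `U = {φ < 0}`,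
`frontier U = {φ = 0}` and nonvanishing derivative on `frontier U`), then there is an open
neighbourhood `W` of `frontier U` such that every `z ∈ U ∩ W` has a unique nearest point
`P ∈ frontier U` (for the Euclidean distance). -/
theorem unique_nearest_boundary_point (n : ℕ) (hn : 1 ≤ n)
    (U : Set (EuclideanSpace ℝ (Fin n))) (hne : U.Nonempty)
    (hU : IsOpen U) (hUb : Bornology.IsBounded U)
    (φ : EuclideanSpace ℝ (Fin n) → ℝ) (hφ : ContDiff ℝ 2 φ)
    (hUφ : U = {x | φ x < 0})
    (hfr : frontier U = {x | φ x = 0})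
    (hgrad : ∀ x ∈ frontier U, fderiv ℝ φ x ≠ 0) :
    ∃ W : Set (EuclideanSpace ℝ (Fin n)), IsOpen W ∧ frontier U ⊆ W ∧
      ∀ z ∈ U ∩ W, ∃! P, P ∈ frontier U ∧ dist z P = Metric.infDist z (frontier U) := by
  rw [hfr] at hgrad ⊢
  obtain ⟨W, hWo, hSW, hW⟩ := unique_nearest_boundary_point_general (c := 0)
    (hφ.differentiable two_ne_zero)
    (hφ.fderiv_right (m := 1) (by norm_num)).locallyLipschitz hgrad
  exact ⟨W, hWo, hSW, fun z hz => hW z hz.2⟩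
end

section
/- (Uniform interior and exterior tangent discs.) Let U ⊆ ℂ be a nonempty bounded open set with C² boundary, in the sense that there is a twice continuously differentiable function φ : ℂ → ℝ with U = {x : φ(x) < 0}, frontier U = {x : φ(x) = 0}, and the derivative of φ nonvanishing at every point of frontier U. Then there exists r₀ > 0 such that for every P ∈ frontier U there exist points C, C' ∈ ℂ with: dist(C, P) = r₀ and the closed disc of radius r₀ centred at C meets the closure of U exactly in {P} (an externally tangent disc), and dist(C', P) = r₀, the closed disc of radius r₀ centred at C' is contained in the closure of U, and it meets frontier U exactly in {P} (an internally tangent disc). -/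
/-!
Let `n` be the unit gradient of `f` at `P`. A point `y = P + v` of the closed ball of radius `r`
centred at `P + r n` satisfies `‖v‖² ≤ 2r ⟪n, v⟫`, so along such `v` the linear term
`‖∇f(P)‖ ⟪n, v⟫` of `f` is at least `‖∇f(P)‖ ‖v‖² / (2r)`. For small `r` this beats the quadratic
Taylor remainder `L ‖v‖²`, and `f` exceeds `f P` on the whole ball except at `P`. Compactness of the
boundary makes `r` uniform; the exterior balls come from `f = φ`, the interior ones from `f = -φ`.
-/

open Metric Filter Topology NormedSpace
open scoped Gradient RealInnerProductSpace NNReal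

section Taylor

variable {E F : Type*} [NormedAddCommGroup E] [NormedSpace ℝ E]
  [NormedAddCommGroup F] [NormedSpace ℝ F] {f : E → F}

lemma norm_sub_sub_fderiv_le_of_lipschitzOnWith {s : Set E} {L : ℝ≥0} {x y : E}
    (hs : Convex ℝ s) (hf : ∀ z ∈ s, DifferentiableAt ℝ f z)
    (hL : LipschitzOnWith L (fderiv ℝ f) s) (hx : x ∈ s) (hy : y ∈ s) :
    ‖f y - f x - fderiv ℝ f x (y - x)‖ ≤ L * ‖y - x‖ ^ 2 := by
  have hseg : segment ℝ x y ⊆ s := hs.segment_subset hx hy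
  have hbound : ∀ z ∈ segment ℝ x y, ‖fderiv ℝ f z - fderiv ℝ f x‖ ≤ L * ‖y - x‖ := fun z hz =>
    (hL.norm_sub_le (hseg hz) hx).trans <| by gcongr; exact norm_sub_le_of_mem_segment hz
  calc ‖f y - f x - fderiv ℝ f x (y - x)‖ ≤ L * ‖y - x‖ * ‖y - x‖ :=
        (convex_segment x y).norm_image_sub_le_of_norm_fderiv_le' (fun z hz => hf z (hseg hz))
          hbound (left_mem_segment ℝ x y) (right_mem_segment ℝ x y)
    _ = L * ‖y - x‖ ^ 2 := by ring

lemma exists_forall_mem_ball_norm_sub_sub_fderiv_le_of_contDiffAt {x : E}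
    (hf : ContDiffAt ℝ 2 f x) :
    ∃ L : ℝ≥0, ∃ ε > 0, ∀ y ∈ ball x ε, ∀ z ∈ ball x ε,
      ‖f z - f y - fderiv ℝ f y (z - y)‖ ≤ L * ‖z - y‖ ^ 2 := by
  obtain ⟨L, t, ht, hL⟩ := (hf.fderiv_right (m := 1) (by norm_num)).exists_lipschitzOnWith
  have hdiff : ∀ᶠ y in 𝓝 x, DifferentiableAt ℝ f y :=
    (hf.eventually (by simp)).mono fun y hy => hy.differentiableAt (by norm_num)
  obtain ⟨ε, hε, hball⟩ := Metric.eventually_nhds_iff_ball.1 (hdiff.and ht)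
  exact ⟨L, ε, hε, fun y hy z hz => norm_sub_sub_fderiv_le_of_lipschitzOnWith (convex_ball x ε)
    (fun w hw => (hball w hw).1) (hL.mono fun w hw => (hball w hw).2) hy hz⟩

end Taylor

section TangentBall

variable {E : Type*} [NormedAddCommGroup E] [InnerProductSpace ℝ E]

lemma norm_sq_le_of_norm_sub_smul_le {n v : E} {r : ℝ} (hn : ‖n‖ = 1) (hv : ‖v - r • n‖ ≤ r) :
    ‖v‖ ^ 2 ≤ 2 * r * ⟪n, v⟫ := by
  have hsq : ‖v - r • n‖ ^ 2 ≤ r ^ 2 := by gcongr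
  rw [norm_sub_sq_real, inner_smul_right, real_inner_comm, norm_smul, hn, mul_one,
    Real.norm_eq_abs, sq_abs] at hsq
  linarith

variable [CompleteSpace E] {f : E → ℝ}

/-- The centre of the ball of radius `r` tangent at `P` to the level set of `f` through `P`, on the
side where `f` increases; the ball on the other side is the one attached to `-f`. -/
noncomputable def tangentCenter (f : E → ℝ) (P : E) (r : ℝ) : E :=
  P + r • normalize (∇ f P)

lemma norm_gradient (f : E → ℝ) (x : E) : ‖∇ f x‖ = ‖fderiv ℝ f x‖ :=
  LinearIsometryEquiv.norm_map _ _

lemma norm_normalize_gradient {x : E} (hx : fderiv ℝ f x ≠ 0) : ‖normalize (∇ f x)‖ = 1 :=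
  norm_normalize_eq_one_iff.2 <| norm_ne_zero_iff.1 <| by rwa [norm_gradient, norm_ne_zero_iff]

lemma fderiv_apply_eq_norm_mul_inner_normalize (f : E → ℝ) (x v : E) :
    fderiv ℝ f x v = ‖fderiv ℝ f x‖ * ⟪normalize (∇ f x), v⟫ := by
  rw [← inner_gradient_left, ← norm_gradient, ← real_inner_smul_left, norm_smul_normalize]

lemma dist_tangentCenter {P : E} {r : ℝ} (hP : fderiv ℝ f P ≠ 0) (hr : 0 ≤ r) :
    dist (tangentCenter f P r) P = r := by
  rw [tangentCenter, dist_self_add_left, norm_smul, norm_normalize_gradient hP, mul_one,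
    Real.norm_of_nonneg hr]

lemma mem_closedBall_tangentCenter {P : E} {r : ℝ} (hP : fderiv ℝ f P ≠ 0) (hr : 0 ≤ r) :
    P ∈ closedBall (tangentCenter f P r) r :=
  mem_closedBall'.2 (dist_tangentCenter hP hr).le

lemma closedBall_tangentCenter_subset {P : E} {r : ℝ} (hP : fderiv ℝ f P ≠ 0) (hr : 0 ≤ r) :
    closedBall (tangentCenter f P r) r ⊆ closedBall P (2 * r) :=
  closedBall_subset_closedBall' <| by rw [dist_tangentCenter hP hr, two_mul]

lemma lt_of_mem_closedBall_tangentCenter {P y : E} {r L : ℝ} (hr : 0 < r)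
    (hP : fderiv ℝ f P ≠ 0) (hrL : L * (2 * r) < ‖fderiv ℝ f P‖)
    (hf : ‖f y - f P - fderiv ℝ f P (y - P)‖ ≤ L * ‖y - P‖ ^ 2)
    (hy : y ∈ closedBall (tangentCenter f P r) r) (hyP : y ≠ P) : f P < f y := by
  have hnormal : ‖y - P‖ ^ 2 ≤ 2 * r * ⟪normalize (∇ f P), y - P⟫ := by
    refine norm_sq_le_of_norm_sub_smul_le (norm_normalize_gradient hP) ?_
    rwa [mem_closedBall_iff_norm, tangentCenter, ← sub_sub] at hy
  have hpos : 0 < ‖y - P‖ ^ 2 := by have := sub_ne_zero.2 hyP; positivity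
  have hlinear : L * ‖y - P‖ ^ 2 < fderiv ℝ f P (y - P) := by
    refine lt_of_mul_lt_mul_left ?_ (by positivity : 0 ≤ 2 * r)
    calc 2 * r * (L * ‖y - P‖ ^ 2) = L * (2 * r) * ‖y - P‖ ^ 2 := by ring
      _ < ‖fderiv ℝ f P‖ * ‖y - P‖ ^ 2 := by gcongr
      _ ≤ ‖fderiv ℝ f P‖ * (2 * r * ⟪normalize (∇ f P), y - P⟫) := by gcongr
      _ = 2 * r * fderiv ℝ f P (y - P) := by
        rw [fderiv_apply_eq_norm_mul_inner_normalize]; ring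
  linarith [(abs_le.1 hf).1]

lemma closedBall_tangentCenter_inter_eq_singleton {P : E} {r : ℝ} {S : Set E}
    (hP : fderiv ℝ f P ≠ 0) (hr : 0 ≤ r)
    (hlt : ∀ y ∈ closedBall (tangentCenter f P r) r, y ≠ P → f P < f y)
    (hPS : P ∈ S) (hS : ∀ y ∈ S, f y ≤ f P) :
    closedBall (tangentCenter f P r) r ∩ S = {P} := by
  refine Set.eq_singleton_iff_unique_mem.2 ⟨⟨mem_closedBall_tangentCenter hP hr, hPS⟩, ?_⟩
  rintro y ⟨hy, hyS⟩
  by_contra hyP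
  exact (hlt y hy hyP).not_ge (hS y hyS)

lemma eventually_forall_closedBall_tangentCenter_lt {x : E} (hf : ContDiffAt ℝ 2 f x)
    (hx : fderiv ℝ f x ≠ 0) :
    ∀ᶠ p in 𝓝[>] (0 : ℝ) ×ˢ 𝓝 x,
      ∀ y ∈ closedBall (tangentCenter f p.2 p.1) p.1, y ≠ p.2 → f p.2 < f y := by
  obtain ⟨L, ε, hε, htaylor⟩ := exists_forall_mem_ball_norm_sub_sub_fderiv_le_of_contDiffAt hf
  have hfderiv : ContinuousAt (fderiv ℝ f) x :=
    (hf.fderiv_right (m := 1) (by norm_num)).continuousAt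
  have hradius : Tendsto (fun p : ℝ × E => 2 * p.1) (𝓝[>] 0 ×ˢ 𝓝 x) (𝓝 0) := by
    have hfst : Tendsto Prod.fst (𝓝[>] (0 : ℝ) ×ˢ 𝓝 x) (𝓝 0) :=
      tendsto_fst.mono_right nhdsWithin_le_nhds
    simpa only [mul_zero] using hfst.const_mul 2
  have hslope : ∀ᶠ p in 𝓝[>] (0 : ℝ) ×ˢ 𝓝 x, L * (2 * p.1) < ‖fderiv ℝ f p.2‖ := by
    refine (hradius.const_mul (L : ℝ)).eventually_lt (hfderiv.norm.tendsto.comp tendsto_snd) ?_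
    rwa [mul_zero, norm_pos_iff]
  have hne : ∀ᶠ p in 𝓝[>] (0 : ℝ) ×ˢ 𝓝 x, fderiv ℝ f p.2 ≠ 0 :=
    (hfderiv.tendsto.comp tendsto_snd).eventually_ne hx
  have hcenter : ∀ᶠ p in 𝓝[>] (0 : ℝ) ×ˢ 𝓝 x, p.2 ∈ ball x (ε / 2) :=
    tendsto_snd.eventually (ball_mem_nhds x (half_pos hε))
  have hpos : ∀ᶠ p in 𝓝[>] (0 : ℝ) ×ˢ 𝓝 x, 0 < p.1 :=
    tendsto_fst.eventually self_mem_nhdsWithin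
  filter_upwards [hslope, hne, hcenter, hpos, hradius.eventually_lt_const (half_pos hε)]
    with ⟨r, P⟩ hrL hP hPx hr hrε y hy hyP
  have hPx' : P ∈ ball x ε := ball_subset_ball (half_le_self hε.le) hPx
  have hyx : y ∈ ball x ε := by
    have hyr := closedBall_tangentCenter_subset hP hr.le hy
    rw [mem_closedBall] at hyr
    rw [mem_ball] at hPx ⊢
    linarith [dist_triangle y P x]
  exact lt_of_mem_closedBall_tangentCenter hr hP hrL (htaylor P hPx' y hyx) hy hyP

lemma eventually_forall_closedBall_tangentCenter_lt_of_isCompact {K : Set E} (hK : IsCompact K)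
    (hf : ∀ x ∈ K, ContDiffAt ℝ 2 f x) (hfK : ∀ x ∈ K, fderiv ℝ f x ≠ 0) :
    ∀ᶠ r in 𝓝[>] (0 : ℝ), ∀ P ∈ K,
      ∀ y ∈ closedBall (tangentCenter f P r) r, y ≠ P → f P < f y := by
  have hnhds : ∀ᶠ p in 𝓝[>] (0 : ℝ) ×ˢ 𝓝ˢ K,
      ∀ y ∈ closedBall (tangentCenter f p.2 p.1) p.1, y ≠ p.2 → f p.2 < f y := by
    simp only [hK.prod_nhdsSet_eq_biSup, eventually_iSup]
    exact fun x hx => eventually_forall_closedBall_tangentCenter_lt (hf x hx) (hfK x hx)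
  exact eventually_prod_principal_iff.1 (hnhds.filter_mono (prod_mono_right _ principal_le_nhdsSet))

lemma closure_eq_setOf_nonpos {X : Type*} [TopologicalSpace X] {U : Set X} {φ : X → ℝ}
    (hU : U = {x | φ x < 0}) (hfr : frontier U = {x | φ x = 0}) : closure U = {x | φ x ≤ 0} := by
  rw [closure_eq_self_union_frontier, hfr, hU]
  ext x
  exact (le_iff_lt_or_eq (a := φ x)).symm

theorem uniform_tangent_discs_general {U : Set E} {φ : E → ℝ} (hU : IsCompact (frontier U))
    (hφ : ∀ x ∈ frontier U, ContDiffAt ℝ 2 φ x) (hUφ : U = {x | φ x < 0})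
    (hfr : frontier U = {x | φ x = 0}) (hgrad : ∀ x ∈ frontier U, fderiv ℝ φ x ≠ 0) :
    ∃ r₀ : ℝ, 0 < r₀ ∧ ∀ P ∈ frontier U,
      (∃ C : E, dist C P = r₀ ∧ closedBall C r₀ ∩ closure U = {P}) ∧
      (∃ C' : E, dist C' P = r₀ ∧ closedBall C' r₀ ⊆ closure U ∧
        closedBall C' r₀ ∩ frontier U = {P}) := by
  have hcl : closure U = {x | φ x ≤ 0} := closure_eq_setOf_nonpos hUφ hfr
  have hgrad_neg : ∀ x ∈ frontier U, fderiv ℝ (-φ) x ≠ 0 := fun x hx => by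
    rw [fderiv_neg]
    exact neg_ne_zero.2 (hgrad x hx)
  have houter := eventually_forall_closedBall_tangentCenter_lt_of_isCompact hU hφ hgrad
  have hinner := eventually_forall_closedBall_tangentCenter_lt_of_isCompact hU
    (fun x hx => (hφ x hx).neg) hgrad_neg
  obtain ⟨r, houter, hinner, hr : 0 < r⟩ :=
    (houter.and (hinner.and self_mem_nhdsWithin)).exists
  refine ⟨r, hr, fun P hP => ?_⟩
  have hφP : φ P = 0 := hfr.subset hP
  refine ⟨⟨tangentCenter φ P r, dist_tangentCenter (hgrad P hP) hr.le, ?_⟩,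
    tangentCenter (-φ) P r, dist_tangentCenter (hgrad_neg P hP) hr.le, fun y hy => ?_, ?_⟩
  · exact closedBall_tangentCenter_inter_eq_singleton (hgrad P hP) hr.le (houter P hP)
      (frontier_subset_closure hP) fun y hy => (hcl.subset hy).trans_eq hφP.symm
  · rcases eq_or_ne y P with rfl | hyP
    · exact frontier_subset_closure hP
    · exact hcl.superset ((neg_lt_neg_iff.1 (hinner P hP y hy hyP)).trans_eq hφP).le
  · exact closedBall_tangentCenter_inter_eq_singleton (hgrad_neg P hP) hr.le (hinner P hP) hP
      fun y hy => neg_le_neg (hφP.trans (hfr.subset hy).symm).le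

end TangentBall

/-- Uniform interior and exterior tangent discs: if `U ⊆ ℂ` is a nonempty bounded open set
with `C²` boundary (given by a `C²` defining function `φ` with `U = {φ < 0}`,
`frontier U = {φ = 0}` and nonvanishing derivative on `frontier U`), then there is an
`r₀ > 0` such that every boundary point `P` admits an externally tangent closed disc of
radius `r₀` meeting `closure U` exactly in `{P}`, and an internally tangent closed disc of
radius `r₀` contained in `closure U` and meeting `frontier U` exactly in `{P}`. -/
theorem uniform_tangent_discs (U : Set ℂ) (hne : U.Nonempty)
    (hU : IsOpen U) (hUb : Bornology.IsBounded U)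
    (φ : ℂ → ℝ) (hφ : ContDiff ℝ 2 φ)
    (hUφ : U = {x | φ x < 0})
    (hfr : frontier U = {x | φ x = 0})
    (hgrad : ∀ x ∈ frontier U, fderiv ℝ φ x ≠ 0) :
    ∃ r₀ : ℝ, 0 < r₀ ∧ ∀ P ∈ frontier U,
      (∃ C : ℂ, dist C P = r₀ ∧ Metric.closedBall C r₀ ∩ closure U = {P}) ∧
      (∃ C' : ℂ, dist C' P = r₀ ∧ Metric.closedBall C' r₀ ⊆ closure U ∧
        Metric.closedBall C' r₀ ∩ frontier U = {P}) := by
  exact uniform_tangent_discs_general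
    (isCompact_of_isClosed_isBounded isClosed_frontier
      (hUb.closure.subset frontier_subset_closure))
    (fun _ _ => hφ.contDiffAt) hUφ hfr hgrad
end
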